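/- Let λ > 0, let a, b > 0 (playing the roles of ‖μ−ν‖₂ and ‖η‖₂ respectively) with b/a > 1, and let t satisfy 0 < t < λ^{−1}(b/a − 1). Then t·a + λ^{−1} e^{−tλ} b < b/λ; i.e. the diffused worst-case error bound t‖μ−ν‖₂ + λ^{−1}e^{−tλ}‖η‖₂ strictly improves on the undiffused bound ‖η‖₂/λ. -/

import Mathlib

/-!
In the dimensionless time `s = t * lam` the claim reads `s * a + exp (-s) * b < b`, and the upper
bound on `t` gives `(1 + s) * a < b`. Multiplying by `1 + s`, the first term is at most `s * b`
and the second is strictly less than `b`, because `1 + s < exp s`.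
-/

theorem one_add_mul_exp_neg_lt_one {s : ℝ} (hs : s ≠ 0) : (1 + s) * Real.exp (-s) < 1 :=
  calc
    (1 + s) * Real.exp (-s) < Real.exp s * Real.exp (-s) := by
      gcongr
      rw [add_comm]
      exact Real.add_one_lt_exp hs
    _ = 1 := by rw [← Real.exp_add, add_neg_cancel, Real.exp_zero]

theorem mul_add_exp_neg_mul_lt {s a b : ℝ} (hs : 0 < s) (hb : 0 < b) (hab : (1 + s) * a ≤ b) :
    s * a + Real.exp (-s) * b < b := by
  have h_scaled : (1 + s) * (s * a + Real.exp (-s) * b) < (1 + s) * b :=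
    calc
      (1 + s) * (s * a + Real.exp (-s) * b)
          = s * ((1 + s) * a) + (1 + s) * Real.exp (-s) * b := by ring
      _ < s * b + 1 * b :=
          add_lt_add_of_le_of_lt (mul_le_mul_of_nonneg_left hab hs.le)
            (mul_lt_mul_of_pos_right (one_add_mul_exp_neg_lt_one hs.ne') hb)
      _ = (1 + s) * b := by ring
  exact lt_of_mul_lt_mul_left h_scaled (by positivity)

/-- Let `lam > 0`, let `a, b > 0` (playing the roles of `‖μ-ν‖₂` and
`‖η‖₂`) with `b/a > 1`, and let `0 < t < lam⁻¹ (b/a - 1)`. Then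
`t·a + lam⁻¹ e^{-t·lam} b < b/lam`: the diffused worst-case error bound strictly
improves on the undiffused bound. -/
theorem diffusion_improves_worst_case_bound
    (lam a b t : ℝ) (hlam : 0 < lam) (ha : 0 < a) (hb : 0 < b)
    (hba : 1 < b / a) (ht0 : 0 < t) (ht1 : t < lam⁻¹ * (b / a - 1)) :
    t * a + lam⁻¹ * Real.exp (-(t * lam)) * b < b / lam := by
  have hab : (1 + t * lam) * a < b := by
    rw [← lt_div_iff₀ ha]
    have h_time : t * lam < b / a - 1 := by rwa [mul_comm, ← lt_inv_mul_iff₀ hlam]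
    linarith
  calc
    t * a + lam⁻¹ * Real.exp (-(t * lam)) * b
        = (t * lam * a + Real.exp (-(t * lam)) * b) / lam := by field_simp
    _ < b / lam :=
        div_lt_div_of_pos_right (mul_add_exp_neg_mul_lt (mul_pos ht0 hlam) hb hab.le) hlam
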